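/- For every ξ ∈ ℝ and every (a,b,c) ∈ 𝒯, the triple (f(a,b,c,ξ), f(b,c,a,ξ), f(c,a,b,ξ)) lies in 𝒯; that is, the three cevians AA_ξ, BB_ξ, CC_ξ of any non-degenerate triangle form a non-degenerate triangle. Equivalently, the diagonal {(ξ,ξ,ξ) : ξ ∈ ℝ} is contained in 𝔸. -/

import Mathlib

/-- The set of side-length triples of non-degenerate triangles. -/
def T : Set (ℝ × ℝ × ℝ) :=
  {p | |p.1 - p.2.1| < p.2.2 ∧ p.2.2 < p.1 + p.2.1}

/-- The cevian length `f a b c ρ = AA_ρ`. -/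
noncomputable def f (a b c ρ : ℝ) : ℝ :=
  Real.sqrt (ρ * (ρ - 1) * a ^ 2 + ρ * b ^ 2 + (1 - ρ) * c ^ 2)

/-!
By Heron's formula, whether nonnegative reals are the sides of a non-degenerate triangle is decided
by the sign of a quadratic form in their squares. Stewart's theorem makes the squared cevians linear
in the squared sides, and for a common parameter `ξ` this linear map multiplies the Heron form by
`(ξ² - ξ + 1)² > 0`.
-/

section CommRing

variable {R : Type*} [CommRing R]

/-- The Heron form: sixteen times the squared area of the triangle whose squared side lengths are
`x`, `y` and `z`. -/
def quadrea (x y z : R) : R :=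
  4 * x * y - (x + y - z) ^ 2

/-- The squared length, by Stewart's theorem, of the cevian from `A` to `(1 - ρ) B + ρ C` in the
triangle with squared side lengths `x = BC²`, `y = CA²` and `z = AB²`; it is the radicand of `f`. -/
def cevianSq (x y z ρ : R) : R :=
  ρ * (ρ - 1) * x + ρ * y + (1 - ρ) * z

theorem quadrea_sq_eq_mul (a b c : R) :
    quadrea (a ^ 2) (b ^ 2) (c ^ 2) = ((a + b) ^ 2 - c ^ 2) * (c ^ 2 - (a - b) ^ 2) := by
  unfold quadrea
  ring

theorem quadrea_cevianSq (x y z ξ : R) :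
    quadrea (cevianSq x y z ξ) (cevianSq y z x ξ) (cevianSq z x y ξ) =
      (ξ ^ 2 - ξ + 1) ^ 2 * quadrea x y z := by
  unfold quadrea cevianSq
  ring

-- As a quadratic polynomial in `ρ`, `cevianSq x y z ρ` has discriminant `-quadrea x y z`.
theorem four_mul_cevianSq (x y z ρ : R) :
    4 * x * cevianSq x y z ρ = (2 * x * ρ + (y - x - z)) ^ 2 + quadrea x y z := by
  unfold quadrea cevianSq
  ring

variable [LinearOrder R] [IsStrictOrderedRing R]

theorem cevianSq_pos {x y z : R} (hx : 0 < x) (h : 0 < quadrea x y z) (ρ : R) :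
    0 < cevianSq x y z ρ := by
  have hmul : 0 < 4 * x * cevianSq x y z ρ := by
    rw [four_mul_cevianSq]
    positivity
  exact pos_of_mul_pos_right hmul (by positivity)

theorem sq_sub_self_add_one_pos (ξ : R) : 0 < ξ ^ 2 - ξ + 1 := by
  linarith [sq_nonneg (2 * ξ - 1)]

end CommRing

theorem pos_of_mem_T {a b c : ℝ} (h : (a, b, c) ∈ T) : 0 < a ∧ 0 < b ∧ 0 < c := by
  obtain ⟨hsub, hadd⟩ : |a - b| < c ∧ c < a + b := h
  obtain ⟨hbc, hac⟩ := abs_lt.mp hsub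
  exact ⟨by linarith, by linarith, by linarith⟩

theorem rotate_mem_T {a b c : ℝ} (h : (a, b, c) ∈ T) : (b, c, a) ∈ T := by
  obtain ⟨hsub, hadd⟩ : |a - b| < c ∧ c < a + b := h
  obtain ⟨hbc, hac⟩ := abs_lt.mp hsub
  exact ⟨abs_lt.mpr ⟨by linarith, by linarith⟩, show a < b + c by linarith⟩

theorem mem_T_iff_quadrea_pos {a b c : ℝ} (ha : 0 ≤ a) (hb : 0 ≤ b) (hc : 0 ≤ c) :
    (a, b, c) ∈ T ↔ 0 < quadrea (a ^ 2) (b ^ 2) (c ^ 2) := by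
  have hsub : |a - b| < c ↔ 0 < c ^ 2 - (a - b) ^ 2 := by
    rw [sub_pos, sq_lt_sq, abs_of_nonneg hc]
  have hadd : c < a + b ↔ 0 < (a + b) ^ 2 - c ^ 2 := by
    rw [sub_pos, sq_lt_sq₀ hc (add_nonneg ha hb)]
  have hle : (a - b) ^ 2 ≤ (a + b) ^ 2 := by
    linarith [mul_nonneg ha hb]
  change |a - b| < c ∧ c < a + b ↔ _
  rw [hsub, hadd, quadrea_sq_eq_mul]
  constructor
  · rintro ⟨hsub_pos, hadd_pos⟩
    exact mul_pos hadd_pos hsub_pos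
  · intro hmul
    -- The factors cannot both be negative, since their sum is nonnegative.
    rcases mul_pos_iff.mp hmul with ⟨hadd_pos, hsub_pos⟩ | ⟨hadd_neg, hsub_neg⟩
    · exact ⟨hsub_pos, hadd_pos⟩
    · linarith

theorem quadrea_pos_of_mem_T {a b c : ℝ} (h : (a, b, c) ∈ T) :
    0 < quadrea (a ^ 2) (b ^ 2) (c ^ 2) := by
  obtain ⟨ha, hb, hc⟩ := pos_of_mem_T h
  exact (mem_T_iff_quadrea_pos ha.le hb.le hc.le).mp h

theorem f_sq_of_mem_T {a b c : ℝ} (h : (a, b, c) ∈ T) (ρ : ℝ) :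
    f a b c ρ ^ 2 = cevianSq (a ^ 2) (b ^ 2) (c ^ 2) ρ :=
  Real.sq_sqrt (cevianSq_pos (pow_pos (pos_of_mem_T h).1 2) (quadrea_pos_of_mem_T h) ρ).le

theorem f_nonneg (a b c ρ : ℝ) : 0 ≤ f a b c ρ :=
  Real.sqrt_nonneg _

theorem cevians_equal_parameter_form_triangle (ξ : ℝ) (a b c : ℝ)
    (habc : (a, b, c) ∈ T) :
    (f a b c ξ, f b c a ξ, f c a b ξ) ∈ T := by
  have hbca : (b, c, a) ∈ T := rotate_mem_T habc
  have hcab : (c, a, b) ∈ T := rotate_mem_T hbca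
  rw [mem_T_iff_quadrea_pos (f_nonneg ..) (f_nonneg ..) (f_nonneg ..), f_sq_of_mem_T habc,
    f_sq_of_mem_T hbca, f_sq_of_mem_T hcab, quadrea_cevianSq]
  exact mul_pos (pow_pos (sq_sub_self_add_one_pos ξ) 2) (quadrea_pos_of_mem_T habc)
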